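/- Let k = 2d with d ≥ 1 and π ∈ S_k with ν(π) > 2. Let j = π(1) and let j' be the unique element of [k] congruent to j − o_j modulo k. Suppose j is not free, j' is not free, j' does not satisfy j ≈_π j', and j' occurs last in its block (i.e., π⁻¹(j') ≥ π⁻¹(j'') for all j'' with j'' ≈_π j'). Then there exists τ ∈ S_k with d_{G_k}(π, τ) ≤ 2 and ν(π) − ν(τ) ≥ 2. -/

import Mathlib

/-- `π` and `τ` are related by a prefix reversal: there is `t ≤ k` such that the first `t`
entries are reversed and the remaining entries agree (0-indexed form of the paper's
1-indexed definition). -/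
def PrefixRev (k : ℕ) (π τ : Equiv.Perm (Fin k)) : Prop :=
  ∃ t : ℕ, ∃ ht : t ≤ k,
    (∀ i : Fin k, t ≤ (i : ℕ) → π i = τ i) ∧
    (∀ i : Fin k, ∀ hi : (i : ℕ) < t, π i = τ ⟨t - 1 - (i : ℕ), by omega⟩)

/-- `π` and `τ` are related by a suffix reversal: there is `t` such that the entries at
positions `< t` agree and the remaining entries are reversed. -/
def SuffixRev (k : ℕ) (π τ : Equiv.Perm (Fin k)) : Prop :=
  ∃ t : ℕ,
    (∀ i : Fin k, (i : ℕ) < t → π i = τ i) ∧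
    (∀ i : Fin k, ∀ hi : t ≤ (i : ℕ), π i = τ ⟨k - 1 - (i : ℕ) + t, by
      have := i.isLt; omega⟩)

/-- The pancake graph `P_k`, whose edges are prefix reversals. -/
def pancakeGraph (k : ℕ) : SimpleGraph (Equiv.Perm (Fin k)) :=
  SimpleGraph.fromRel (PrefixRev k)

/-- The graph `G_k`, whose edges are prefix and suffix reversals. -/
def prefixSuffixGraph (k : ℕ) : SimpleGraph (Equiv.Perm (Fin k)) :=
  SimpleGraph.fromRel (fun π τ => PrefixRev k π τ ∨ SuffixRev k π τ)

/-- The values of `π` at positions `p` and `q` differ by `1`, or are `{1, k}`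
(1-indexed), i.e. `{0, k - 1}` in this 0-indexed formalization. -/
def PiAdjacency (k : ℕ) (π : Equiv.Perm (Fin k)) (p q : Fin k) : Prop :=
  (((π p : ℕ) : ℤ) - ((π q : ℕ) : ℤ)).natAbs = 1 ∨
    ({(π p : ℕ), (π q : ℕ)} : Set ℕ) = {0, k - 1}

/-- Positions `i` and `i + 1` (0-indexed) form a `π`-adjacency. -/
def PosAdjacency (k : ℕ) (π : Equiv.Perm (Fin k)) (i : ℕ) : Prop :=
  ∃ h : i + 1 < k, PiAdjacency k π ⟨i, by omega⟩ ⟨i + 1, h⟩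

/-- The equivalence relation `∼_π`: `a ∼_π b` iff every pair of consecutive positions
between the position of `a` and the position of `b` is a `π`-adjacency. -/
def Sim (k : ℕ) (π : Equiv.Perm (Fin k)) (a b : Fin k) : Prop :=
  ∀ i : ℕ, min ((π.symm a : ℕ)) ((π.symm b : ℕ)) ≤ i →
    i < max ((π.symm a : ℕ)) ((π.symm b : ℕ)) → PosAdjacency k π i

/-- `∼_π` has exactly one equivalence class on `[k]`. -/
def OneClass (k : ℕ) (π : Equiv.Perm (Fin k)) : Prop :=
  ∀ a b : Fin k, Sim k π a b

/-- The pairing `φ(j) = j + o_j`, swapping `2i - 1 ↔ 2i` (1-indexed),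
i.e. `2i ↔ 2i + 1` (0-indexed). -/
def partner (d : ℕ) (j : Fin (2 * d)) : Fin (2 * d) :=
  ⟨if (j : ℕ) % 2 = 0 then (j : ℕ) + 1 else (j : ℕ) - 1, by
    have := j.isLt; split <;> omega⟩

/-- The equivalence relation `≈_π`. -/
def ApproxSim (d : ℕ) (π : Equiv.Perm (Fin (2 * d))) (a b : Fin (2 * d)) : Prop :=
  a = b ∨ (Sim (2 * d) π a b ∧ Sim (2 * d) π a (partner d a) ∧
    Sim (2 * d) π b (partner d b))

/-- `j` is free, i.e. `{j}` is an equivalence class (a singleton) of `≈_π`. -/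
def IsFree (d : ℕ) (π : Equiv.Perm (Fin (2 * d))) (j : Fin (2 * d)) : Prop :=
  ∀ j' : Fin (2 * d), ApproxSim d π j j' → j' = j

/-- The `≈_π`-equivalence class of `j`, as a finite set. -/
noncomputable def classOf (d : ℕ) (π : Equiv.Perm (Fin (2 * d))) (j : Fin (2 * d)) :
    Finset (Fin (2 * d)) :=
  @Finset.filter _ (fun j' => ApproxSim d π j j') (Classical.decPred _) Finset.univ

/-- `S(π)`, the number of singletons of `π`. -/
noncomputable def numSingletons (d : ℕ) (π : Equiv.Perm (Fin (2 * d))) : ℕ :=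
  (@Finset.filter _ (fun j => IsFree d π j) (Classical.decPred _) Finset.univ).card

/-- `B(π)`, the number of blocks (equivalence classes of `≈_π` of size `> 1`) of `π`. -/
noncomputable def numBlocks (d : ℕ) (π : Equiv.Perm (Fin (2 * d))) : ℕ :=
  ((Finset.univ.image (classOf d π)).filter (fun C => 1 < C.card)).card

/-- The potential function `ν(π) = (3/2) S(π) + 2 B(π)`. -/
noncomputable def nu (d : ℕ) (π : Equiv.Perm (Fin (2 * d))) : ℚ :=
  3 / 2 * (numSingletons d π : ℚ) + 2 * (numBlocks d π : ℚ)

/-- The unique element of `[k]` congruent to `j - o_j` modulo `k` (0-indexed form). -/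
def prevVal (d : ℕ) (j : Fin (2 * d)) : Fin (2 * d) :=
  ⟨if (j : ℕ) % 2 = 0 then ((j : ℕ) + 2 * d - 1) % (2 * d) else ((j : ℕ) + 1) % (2 * d), by
    have := j.isLt; split <;> exact Nat.mod_lt _ (by omega)⟩

def VA (k : ℕ) (a b : Fin k) : Prop :=
  (((a : ℕ) : ℤ) - ((b : ℕ) : ℤ)).natAbs = 1 ∨ ({(a : ℕ), (b : ℕ)} : Set ℕ) = {0, k - 1}

lemma VA_symm {k : ℕ} {a b : Fin k} (h : VA k a b) : VA k b a := by
  rcases h with h | h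
  · left; omega
  · right; rw [Set.pair_comm]; exact h

lemma posAdj_iff {k : ℕ} (π : Equiv.Perm (Fin k)) (i : ℕ) :
    PosAdjacency k π i ↔ ∃ h : i + 1 < k, VA k (π ⟨i, by omega⟩) (π ⟨i + 1, h⟩) := Iff.rfl

lemma Sim_symm {k : ℕ} {π : Equiv.Perm (Fin k)} {a b : Fin k} (h : Sim k π a b) :
    Sim k π b a := by
  intro i h1 h2
  exact h i (by omega) (by omega)

lemma Sim_refl {k : ℕ} {π : Equiv.Perm (Fin k)} (a : Fin k) : Sim k π a a := by
  intro i h1 h2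
  omega

lemma Sim_trans {k : ℕ} {π : Equiv.Perm (Fin k)} {a b c : Fin k} (h : Sim k π a b)
    (h' : Sim k π b c) : Sim k π a c := by
  intro i h1 h2
  by_cases hi : min ((π.symm a : ℕ)) ((π.symm b : ℕ)) ≤ i ∧
      i < max ((π.symm a : ℕ)) ((π.symm b : ℕ))
  · exact h i hi.1 hi.2
  · exact h' i (by omega) (by omega)

/-- consecutive positions with adjacent values -/
lemma Sim_of_consec {k : ℕ} {τ : Equiv.Perm (Fin k)} {a b : Fin k}
    (hpos : (τ.symm a : ℕ) + 1 = τ.symm b) (hv : VA k a b) : Sim k τ a b := by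
  intro i h1 h2
  have hi : i = (τ.symm a : ℕ) := by omega
  subst hi
  have hlt := (τ.symm b).isLt
  refine (posAdj_iff _ _).2 ⟨by omega, ?_⟩
  have e : (⟨(τ.symm a : ℕ) + 1, by omega⟩ : Fin k) = τ.symm b := Fin.ext hpos
  simp only [e]
  simpa using hv

lemma Sim_mono {k : ℕ} {π τ : Equiv.Perm (Fin k)}
    (H : ∀ i (h : i + 1 < k), PosAdjacency k π i →
      Sim k τ (π ⟨i, by omega⟩) (π ⟨i + 1, h⟩)) {a b : Fin k} (h : Sim k π a b) :
    Sim k τ a b := by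
  have key : ∀ n : ℕ, ∀ a b : Fin k, (π.symm a : ℕ) + n = π.symm b → Sim k π a b →
      Sim k τ a b := by
    intro n
    induction n with
    | zero =>
      intro a b hab _
      have : a = b := π.symm.injective (Fin.ext (by simpa using hab))
      rw [this]; exact Sim_refl b
    | succ n ih =>
      intro a b hab hs
      have hlt := (π.symm b).isLt
      have hm : (π.symm a : ℕ) + n + 1 < k := by omega
      have h1 : Sim k τ a (π ⟨(π.symm a : ℕ) + n, by omega⟩) := by
        apply ih
        · simp
        · intro i h1 h2
          simp only [Equiv.symm_apply_apply] at h1 h2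
          exact hs i (by omega) (by omega)
      have h2 := H _ hm (hs _ (by omega) (by omega))
      have e : π ⟨(π.symm a : ℕ) + n + 1, hm⟩ = b := by
        rw [← Equiv.eq_symm_apply]; exact Fin.ext (by simpa using by omega)
      rw [e] at h2
      exact Sim_trans h1 h2
  rcases le_total (π.symm a : ℕ) (π.symm b : ℕ) with hl | hl
  · exact key _ a b (Nat.add_sub_of_le hl) h
  · exact Sim_symm (key _ b a (Nat.add_sub_of_le hl) (Sim_symm h))

def sufPerm (k s : ℕ) : Equiv.Perm (Fin k) :=
  Function.Involutive.toPerm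
    (fun i => if h : (i : ℕ) < s then i else ⟨k - 1 - (i : ℕ) + s, by have := i.isLt; omega⟩)
    (by
      intro i
      have := i.isLt
      apply Fin.ext
      by_cases h : (i : ℕ) < s
      · simp [h]
      · have h2 : ¬ (k - 1 - (i : ℕ) + s < s) := by omega
        simp only [h, h2, dite_false]
        omega)

def prePerm (k t : ℕ) (ht : t ≤ k) : Equiv.Perm (Fin k) :=
  Function.Involutive.toPerm
    (fun i => if h : (i : ℕ) < t then ⟨t - 1 - (i : ℕ), by omega⟩ else i)
    (by
      intro i
      have := i.isLt
      apply Fin.ext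
      by_cases h : (i : ℕ) < t
      · have h2 : t - 1 - (i : ℕ) < t := by omega
        simp only [h, h2, dite_true]
        omega
      · simp [h])

lemma sufPerm_val (k s : ℕ) (i : Fin k) :
    (sufPerm k s i : ℕ) = if (i : ℕ) < s then (i : ℕ) else k - 1 - (i : ℕ) + s := by
  show ((if h : _ then _ else _ : Fin k) : ℕ) = _
  split_ifs <;> rfl

lemma prePerm_val (k t : ℕ) (ht : t ≤ k) (i : Fin k) :
    (prePerm k t ht i : ℕ) = if (i : ℕ) < t then t - 1 - (i : ℕ) else (i : ℕ) := by
  show ((if h : _ then _ else _ : Fin k) : ℕ) = _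
  split_ifs <;> rfl

lemma sufPerm_symm (k s : ℕ) : (sufPerm k s).symm = sufPerm k s := rfl
lemma prePerm_symm (k t : ℕ) (ht : t ≤ k) : (prePerm k t ht).symm = prePerm k t ht := rfl

lemma suf_rel (k s : ℕ) (π : Equiv.Perm (Fin k)) :
    SuffixRev k π ((sufPerm k s).trans π) := by
  refine ⟨s, ?_, ?_⟩
  · intro i hi
    rw [Equiv.trans_apply]
    congr 1
    apply Fin.ext; rw [sufPerm_val]; simp [hi]
  · intro i hi
    have := i.isLt
    rw [Equiv.trans_apply]
    congr 1
    apply Fin.ext; rw [sufPerm_val]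
    have h2 : ¬ (k - 1 - (i : ℕ) + s < s) := by omega
    simp only [h2, if_false]; omega

lemma pre_rel (k t : ℕ) (ht : t ≤ k) (π : Equiv.Perm (Fin k)) :
    PrefixRev k π ((prePerm k t ht).trans π) := by
  refine ⟨t, ht, ?_, ?_⟩
  · intro i hi
    rw [Equiv.trans_apply]
    congr 1
    apply Fin.ext; rw [prePerm_val]; simp [hi]
  · intro i hi
    rw [Equiv.trans_apply]
    congr 1
    apply Fin.ext; rw [prePerm_val]
    have h2 : (t - 1 - (i : ℕ) < t) := by omega
    simp only [h2, if_true]; omega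

lemma walk_one {k : ℕ} {π σ : Equiv.Perm (Fin k)} (h : PrefixRev k π σ ∨ SuffixRev k π σ) :
    ∃ w : (prefixSuffixGraph k).Walk π σ, w.length ≤ 1 := by
  by_cases e : π = σ
  · subst e; exact ⟨SimpleGraph.Walk.nil, by simp⟩
  · have : (prefixSuffixGraph k).Adj π σ := by
      rw [prefixSuffixGraph, SimpleGraph.fromRel_adj]; exact ⟨e, Or.inl h⟩
    exact ⟨this.toWalk, by simp⟩

lemma partner_partner (d : ℕ) (a : Fin (2 * d)) : partner d (partner d a) = a := by
  apply Fin.ext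
  simp only [partner]
  split_ifs <;> omega

lemma VA_prev (d : ℕ) (a : Fin (2 * d)) : VA (2 * d) a (prevVal d a) := by
  have := a.isLt
  simp only [VA, prevVal]
  split_ifs with h
  · by_cases h0 : (a : ℕ) = 0
    · right
      rw [h0, zero_add, Nat.mod_eq_of_lt (by omega)]
    · left
      have : ((a : ℕ) + 2 * d - 1) % (2 * d) = a - 1 := by
        rw [show (a : ℕ) + 2 * d - 1 = (a - 1) + 2 * d by omega, Nat.add_mod_right,
          Nat.mod_eq_of_lt (by omega)]
      rw [this]; omega
  · by_cases h0 : (a : ℕ) + 1 = 2 * d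
    · right
      rw [h0, Nat.mod_self, Set.pair_comm]
      congr 2; omega
    · left
      rw [Nat.mod_eq_of_lt (by omega)]; omega

/-- The cyclic neighbours of `prevVal a` are `a` and its partner. -/
lemma VA_prev_cases (d : ℕ) (a b : Fin (2 * d)) (h : VA (2 * d) (prevVal d a) b) :
    b = a ∨ b = partner d (prevVal d a) := by
  have ha := a.isLt
  have hb := b.isLt
  have hp : ((prevVal d a : ℕ) = if (a : ℕ) % 2 = 0 then (if (a : ℕ) = 0 then 2 * d - 1 else a - 1)
      else (if (a : ℕ) + 1 = 2 * d then 0 else a + 1)) := by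
    simp only [prevVal]
    split_ifs with h1 h2 h2
    · rw [h2, zero_add, Nat.mod_eq_of_lt (by omega)]
    · rw [show (a : ℕ) + 2 * d - 1 = (a - 1) + 2 * d by omega, Nat.add_mod_right,
          Nat.mod_eq_of_lt (by omega)]
    · rw [h2, Nat.mod_self]
    · rw [Nat.mod_eq_of_lt (by omega)]
  have hpl := (prevVal d a).isLt
  have h' : (((prevVal d a : ℕ) : ℤ) - ((b : ℕ) : ℤ)).natAbs = 1 ∨
      ((prevVal d a : ℕ) = 0 ∧ (b : ℕ) = 2 * d - 1) ∨
      ((prevVal d a : ℕ) = 2 * d - 1 ∧ (b : ℕ) = 0) := by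
    rcases h with h | h
    · exact Or.inl h
    · right
      rwa [Set.pair_eq_pair_iff] at h
  rw [Fin.ext_iff, Fin.ext_iff]
  simp only [partner]
  generalize (prevVal d a : ℕ) = q at *
  split_ifs at hp ⊢ <;> omega

/-! Counting -/

lemma mem_classOf {d : ℕ} {π : Equiv.Perm (Fin (2 * d))} {a b : Fin (2 * d)} :
    b ∈ classOf d π a ↔ ApproxSim d π a b := by
  simp [classOf]

lemma AS_refl {d : ℕ} {π : Equiv.Perm (Fin (2 * d))} (a : Fin (2 * d)) : ApproxSim d π a a :=
  Or.inl rfl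

lemma AS_symm {d : ℕ} {π : Equiv.Perm (Fin (2 * d))} {a b : Fin (2 * d)}
    (h : ApproxSim d π a b) : ApproxSim d π b a := by
  rcases h with h | ⟨h1, h2, h3⟩
  · exact Or.inl h.symm
  · exact Or.inr ⟨Sim_symm h1, h3, h2⟩

lemma AS_trans {d : ℕ} {π : Equiv.Perm (Fin (2 * d))} {a b c : Fin (2 * d)}
    (h : ApproxSim d π a b) (h' : ApproxSim d π b c) : ApproxSim d π a c := by
  rcases h with h | ⟨h1, h2, h3⟩
  · exact h ▸ h'
  · rcases h' with h | ⟨h4, h5, h6⟩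
    · exact h ▸ Or.inr ⟨h1, h2, h3⟩
    · exact Or.inr ⟨Sim_trans h1 h4, h2, h6⟩

lemma classOf_eq {d : ℕ} {π : Equiv.Perm (Fin (2 * d))} {a b : Fin (2 * d)} :
    classOf d π a = classOf d π b ↔ ApproxSim d π a b := by
  constructor
  · intro h
    rw [← mem_classOf, h, mem_classOf]; exact AS_refl b
  · intro h
    ext c
    rw [mem_classOf, mem_classOf]
    exact ⟨fun h' => AS_trans (AS_symm h) h', fun h' => AS_trans h h'⟩

lemma card_classOf_pos {d : ℕ} {π : Equiv.Perm (Fin (2 * d))} (a : Fin (2 * d)) :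
    0 < (classOf d π a).card := Finset.card_pos.2 ⟨a, mem_classOf.2 (AS_refl a)⟩

lemma free_iff {d : ℕ} {π : Equiv.Perm (Fin (2 * d))} (a : Fin (2 * d)) :
    IsFree d π a ↔ ¬ 1 < (classOf d π a).card := by
  rw [not_lt, Finset.card_le_one]
  constructor
  · intro h b hb c hc
    rw [h b (mem_classOf.1 hb), h c (mem_classOf.1 hc)]
  · intro h b hb
    exact h b (mem_classOf.2 hb) a (mem_classOf.2 (AS_refl a))

noncomputable def wt {α : Type*} (C : Finset α) : ℚ := if 1 < C.card then 2 else 3 / 2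

lemma nu_eq (d : ℕ) (π : Equiv.Perm (Fin (2 * d))) :
    nu d π = ∑ C ∈ Finset.univ.image (classOf d π), wt C := by
  classical
  have hS : numSingletons d π =
      ((Finset.univ.image (classOf d π)).filter (fun C => ¬ 1 < C.card)).card := by
    unfold numSingletons
    apply Finset.card_bij (fun a _ => classOf d π a)
    · intro a ha
      simp only [Finset.mem_filter, Finset.mem_univ, true_and] at ha
      simp only [Finset.mem_filter, Finset.mem_image, Finset.mem_univ, true_and]
      exact ⟨⟨a, rfl⟩, (free_iff a).1 ha⟩
    · intro a ha b hb hab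
      simp only [Finset.mem_filter, Finset.mem_univ, true_and] at ha
      exact (ha b (classOf_eq.1 hab)).symm
    · intro C hC
      simp only [Finset.mem_filter, Finset.mem_image, Finset.mem_univ, true_and] at hC
      obtain ⟨⟨a, rfl⟩, h⟩ := hC
      exact ⟨a, by simpa using (free_iff a).2 h, rfl⟩
  unfold nu
  rw [hS, numBlocks]
  simp only [wt]
  rw [Finset.sum_ite]
  simp only [Finset.sum_const, nsmul_eq_mul]
  ring

lemma nu_drop {d : ℕ} {π τ : Equiv.Perm (Fin (2 * d))}
    (H : ∀ a b, ApproxSim d π a b → ApproxSim d τ a b) {x y : Fin (2 * d)}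
    (hx : ¬ IsFree d π x) (hy : ¬ IsFree d π y) (hxy : ¬ ApproxSim d π x y)
    (hxy' : ApproxSim d τ x y) : 2 ≤ nu d π - nu d τ := by
  classical
  have wpos : ∀ C : Finset (Fin (2 * d)), 0 ≤ wt C := by
    intro C; unfold wt; split_ifs <;> norm_num
  have wle : ∀ C : Finset (Fin (2 * d)), wt C ≤ 2 := by
    intro C; unfold wt; split_ifs <;> norm_num
  have wge : ∀ C : Finset (Fin (2 * d)), 3 / 2 ≤ wt C := by
    intro C; unfold wt; split_ifs <;> norm_num
  have wblk : ∀ a, ¬ IsFree d π a → wt (classOf d π a) = 2 := by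
    intro a ha
    rw [free_iff, not_not] at ha
    simp [wt, ha]
  -- the inner sums
  let F : Finset (Fin (2 * d)) → Finset (Finset (Fin (2 * d))) := fun D =>
    (Finset.univ.image (classOf d π)).filter (fun C => C ⊆ D)
  have memF : ∀ a b, ApproxSim d τ b a → classOf d π a ∈ F (classOf d τ b) := by
    intro a b hab
    simp only [F, Finset.mem_filter, Finset.mem_image, Finset.mem_univ, true_and]
    refine ⟨⟨a, rfl⟩, ?_⟩
    intro c hc
    exact mem_classOf.2 (AS_trans hab (H _ _ (mem_classOf.1 hc)))
  have pair : ∀ a b c, ApproxSim d τ c a → ApproxSim d τ c b → ¬ ApproxSim d π a b →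
      wt (classOf d π a) + wt (classOf d π b) ≤ ∑ C ∈ F (classOf d τ c), wt C := by
    intro a b c ha hb hab
    have hne : classOf d π a ≠ classOf d π b := fun h => hab (classOf_eq.1 h)
    rw [← Finset.sum_pair hne]
    apply Finset.sum_le_sum_of_subset_of_nonneg
    · intro C hC
      simp only [Finset.mem_insert, Finset.mem_singleton] at hC
      rcases hC with rfl | rfl
      · exact memF _ _ ha
      · exact memF _ _ hb
    · intro C _ _; exact wpos C
  have base : ∀ c, wt (classOf d τ c) ≤ ∑ C ∈ F (classOf d τ c), wt C := by
    intro c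
    by_cases hall : ∀ a, ApproxSim d τ c a → ApproxSim d π c a
    · have e : classOf d τ c = classOf d π c := by
        ext a; rw [mem_classOf, mem_classOf]; exact ⟨hall a, H c a⟩
      calc wt (classOf d τ c) = wt (classOf d π c) := by rw [e]
        _ ≤ _ := Finset.single_le_sum (f := fun C => wt C) (fun C _ => wpos C)
              (memF c c (AS_refl c))
    · push Not at hall
      obtain ⟨a, h1, h2⟩ := hall
      have := pair c a c (AS_refl c) h1 h2
      linarith [wle (classOf d τ c), wge (classOf d π c), wge (classOf d π a)]
  have top : wt (classOf d τ x) + 2 ≤ ∑ C ∈ F (classOf d τ x), wt C := by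
    have := pair x y x (AS_refl x) hxy' hxy
    rw [wblk x hx, wblk y hy] at this
    linarith [wle (classOf d τ x)]
  have hsum : ∑ D ∈ Finset.univ.image (classOf d τ), ∑ C ∈ F D, wt C = nu d π := by
    rw [nu_eq]
    simp only [F, Finset.sum_filter]
    rw [Finset.sum_comm]
    apply Finset.sum_congr rfl
    intro C hC
    simp only [Finset.mem_image, Finset.mem_univ, true_and] at hC
    obtain ⟨a, rfl⟩ := hC
    rw [Finset.sum_eq_single (classOf d τ a)]
    · have := (Finset.mem_filter.1 (memF a a (AS_refl a))).2
      simp [this]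
    · intro D hD hne
      simp only [Finset.mem_image, Finset.mem_univ, true_and] at hD
      obtain ⟨b, rfl⟩ := hD
      rw [if_neg]
      intro hsub
      exact hne (classOf_eq.2 (mem_classOf.1 (hsub (mem_classOf.2 (AS_refl a)))))
    · intro h
      exact absurd (Finset.mem_image_of_mem _ (Finset.mem_univ a)) h
  have hx_mem : classOf d τ x ∈ Finset.univ.image (classOf d τ) :=
    Finset.mem_image_of_mem _ (Finset.mem_univ x)
  rw [← hsum, nu_eq d τ, ← Finset.add_sum_erase _ _ hx_mem,
    ← Finset.add_sum_erase _ (fun C => wt C) hx_mem]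
  have : ∑ D ∈ (Finset.univ.image (classOf d τ)).erase (classOf d τ x), wt D ≤
      ∑ D ∈ (Finset.univ.image (classOf d τ)).erase (classOf d τ x), ∑ C ∈ F D, wt C := by
    apply Finset.sum_le_sum
    intro D hD
    have hD := Finset.mem_of_mem_erase hD
    simp only [Finset.mem_image, Finset.mem_univ, true_and] at hD
    obtain ⟨b, rfl⟩ := hD
    exact base b
  linarith

lemma sim_partner_of_not_free {d : ℕ} {π : Equiv.Perm (Fin (2 * d))} {a : Fin (2 * d)}
    (h : ¬ IsFree d π a) : Sim (2 * d) π a (partner d a) := by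
  unfold IsFree at h
  push Not at h
  obtain ⟨b, hb, hne⟩ := h
  rcases hb with hb | hb
  · exact absurd hb.symm hne
  · exact hb.2.1

/-- Let `k = 2d`, `d ≥ 1`, and `π ∈ S_k` with `ν(π) > 2`. Let
`j = π(1)` and `j'` the unique element of `[k]` congruent to `j - o_j` mod `k`. If `j`
and `j'` are not free, `j ≈_π j'` fails, and `j'` occurs last in its block, then there is
`τ` with `d_{G_k}(π, τ) ≤ 2` and `ν(π) - ν(τ) ≥ 2`. -/
theorem statement_14 (d : ℕ) (hd : 1 ≤ d) (π : Equiv.Perm (Fin (2 * d)))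
    (hν : 2 < nu d π)
    (hj : ¬ IsFree d π (π ⟨0, by omega⟩))
    (hj' : ¬ IsFree d π (prevVal d (π ⟨0, by omega⟩)))
    (hsep : ¬ ApproxSim d π (π ⟨0, by omega⟩) (prevVal d (π ⟨0, by omega⟩)))
    (hlast : ∀ j'' : Fin (2 * d), ApproxSim d π (prevVal d (π ⟨0, by omega⟩)) j'' →
      (π.symm j'' : ℕ) ≤ (π.symm (prevVal d (π ⟨0, by omega⟩)) : ℕ)) :
    ∃ τ : Equiv.Perm (Fin (2 * d)),
      (prefixSuffixGraph (2 * d)).dist π τ ≤ 2 ∧ 2 ≤ nu d π - nu d τ := by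
  set j := π ⟨0, by omega⟩ with hjdef
  set j' := prevVal d j with hj'def
  have sj := sim_partner_of_not_free hj
  have sj' := sim_partner_of_not_free hj'
  have hns : ¬ Sim (2 * d) π j j' := fun h => hsep (Or.inr ⟨h, sj, sj'⟩)
  have hj0 : (π.symm j : ℕ) = 0 := by simp [hjdef]
  obtain ⟨p, hp⟩ : ∃ p, p = (π.symm j' : ℕ) := ⟨_, rfl⟩
  have hpk : p < 2 * d := hp ▸ (π.symm j').isLt
  have hpj : π ⟨p, hpk⟩ = j' := by
    rw [← Equiv.eq_symm_apply]; exact Fin.ext hp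
  -- the run ends at `p`
  have hend : ¬ PosAdjacency (2 * d) π p := by
    intro h
    obtain ⟨h1, hv⟩ := (posAdj_iff _ _).1 h
    rw [hpj] at hv
    rcases VA_prev_cases d j _ hv with e | e
    · rw [hjdef, π.injective.eq_iff, Fin.ext_iff] at e
      simp at e
    · have hl := hlast (π ⟨p + 1, h1⟩) (by
        rw [e]
        refine Or.inr ⟨sj', sj', ?_⟩
        rw [partner_partner]
        exact Sim_symm sj')
      rw [← hp] at hl
      simp at hl
  -- the start of the run
  have hex : ∃ s, s ≤ p ∧ ∀ i, s ≤ i → i < p → PosAdjacency (2 * d) π i :=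
    ⟨p, le_rfl, fun i h1 h2 => by omega⟩
  classical
  obtain ⟨s, ⟨hsp, hs⟩, hmin⟩ : ∃ s, (s ≤ p ∧ ∀ i, s ≤ i → i < p → PosAdjacency (2 * d) π i) ∧
      ∀ m, m < s → ¬ (m ≤ p ∧ ∀ i, m ≤ i → i < p → PosAdjacency (2 * d) π i) :=
    ⟨Nat.find hex, Nat.find_spec hex, fun m hm => Nat.find_min hex hm⟩
  have hs0 : 0 < s := by
    rcases Nat.eq_zero_or_pos s with h | h
    · exfalso; apply hns
      intro i h1 h2
      exact hs i (by omega) (by omega)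
    · exact h
  have hstart : ¬ PosAdjacency (2 * d) π (s - 1) := by
    intro h
    refine hmin (s - 1) (by omega) ⟨by omega, fun i h1 h2 => ?_⟩
    rcases Nat.lt_or_ge i s with h3 | h3
    · rwa [show i = s - 1 by omega]
    · exact hs i h3 h2
  have ht : 2 * d - (p - s + 1) ≤ 2 * d := by omega
  obtain ⟨t, htdef⟩ : ∃ t, t = 2 * d - (p - s + 1) := ⟨_, rfl⟩
  rw [← htdef] at ht
  let σ := (sufPerm (2 * d) s).trans π
  let τ := (prePerm (2 * d) t ht).trans σ
  have hτ : ∀ a, (τ.symm a : ℕ) = (prePerm (2 * d) t ht (sufPerm (2 * d) s (π.symm a)) : ℕ) := by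
    intro a; rfl
  simp only [prePerm_val, sufPerm_val] at hτ
  have hmono : ∀ a b, Sim (2 * d) π a b → Sim (2 * d) τ a b := by
    intro a b
    apply Sim_mono
    intro i hi hadj
    have h1 : i ≠ p := fun h => hend (h ▸ hadj)
    have h2 : i ≠ s - 1 := fun h => hstart (h ▸ hadj)
    obtain ⟨_, hv⟩ := (posAdj_iff _ _).1 hadj
    have e1 := hτ (π ⟨i, by omega⟩)
    have e2 := hτ (π ⟨i + 1, hi⟩)
    simp only [Equiv.symm_apply_apply] at e1 e2
    have : (τ.symm (π ⟨i, by omega⟩) : ℕ) + 1 = τ.symm (π ⟨i + 1, hi⟩) ∨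
        (τ.symm (π ⟨i + 1, hi⟩) : ℕ) + 1 = τ.symm (π ⟨i, by omega⟩) := by
      rw [e1, e2]
      split_ifs <;> omega
    rcases this with h | h
    · exact Sim_of_consec h hv
    · exact Sim_symm (Sim_of_consec h (VA_symm hv))
  refine ⟨τ, ?_, ?_⟩
  · obtain ⟨w1, h1⟩ := walk_one (Or.inr (suf_rel (2 * d) s π))
    obtain ⟨w2, h2⟩ := walk_one (Or.inl (pre_rel (2 * d) t ht σ))
    refine (SimpleGraph.dist_le (w1.append w2)).trans ?_
    rw [SimpleGraph.Walk.length_append]; omega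
  · refine nu_drop ?_ hj hj' hsep ?_
    · intro a b h
      rcases h with h | ⟨h1, h2, h3⟩
      · exact Or.inl h
      · exact Or.inr ⟨hmono _ _ h1, hmono _ _ h2, hmono _ _ h3⟩
    · refine Or.inr ⟨Sim_of_consec ?_ (VA_prev d j), hmono _ _ sj, hmono _ _ sj'⟩
      rw [hτ, hτ, hj0, ← hp]
      split_ifs <;> omega
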